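/- arXiv:1807.04394 — 2 statements merged into one kernel-verified Lean document; each statement's English description precedes it below -/
import Mathlib

section
/- Let p > 5 be a prime with p ≡ 1 (mod 3), K a field of characteristic p, s, t nonzero elements of K, and F = x*y*z^3 + s*x^5 + t*y^5 ∈ K[x,y,z]. Then the coefficient of x^(2p-2)*y^(2p-2)*z^(p-1) in F^(p-1) equals s^((p-1)/3) * t^((p-1)/3) * M, where M is the image in K of the multinomial coefficient (p-1)!/( ((p-1)/3)! )^3; in particular this coefficient is nonzero in K. -/
open MvPolynomial

/-!
The exponent vectors `(1, 1, 3)`, `(5, 0, 0)`, `(0, 5, 0)` of the three terms of `F` are linearly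
independent, so distinct terms of the multinomial expansion of a power of `F` are multiples of
distinct monomials, and each nonzero coefficient of that power is a single term of the expansion.
The multinomial coefficient of this term divides `(p - 1)!`, which is prime to `p`.
-/

theorem multinomial_const {ι : Type*} (v : Finset ι) (m : ℕ) :
    Nat.multinomial v (fun _ => m) = (v.card * m).factorial / m.factorial ^ v.card := by
  simp [Nat.multinomial]

theorem natCast_multinomial_ne_zero {R ι : Type*} [NonAssocSemiring R] {v : Finset ι} {k : ι → ℕ}
    (h : ((∑ i ∈ v, k i).factorial : R) ≠ 0) : (Nat.multinomial v k : R) ≠ 0 := by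
  rw [← Nat.multinomial_spec, Nat.cast_mul] at h
  exact right_ne_zero_of_mul h

theorem natCast_factorial_ne_zero_of_lt_char {R : Type*} [AddMonoidWithOne R] {p n : ℕ}
    [CharP R p] (hp : p.Prime) (hn : n < p) : (n.factorial : R) ≠ 0 := by
  rw [Ne, CharP.cast_eq_zero_iff R p, hp.dvd_factorial]
  exact hn.not_ge

section SumOfMonomials

variable {R σ ι : Type*} [CommSemiring R]

theorem sum_monomial_pow [DecidableEq ι] (v : Finset ι) (e : ι → σ →₀ ℕ) (a : ι → R) (n : ℕ) :
    (∑ i ∈ v, monomial (e i) (a i)) ^ n =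
      ∑ k ∈ v.piAntidiag n,
        monomial (∑ i ∈ v, k i • e i) (Nat.multinomial v k * ∏ i ∈ v, a i ^ k i) := by
  simp_rw [Finset.sum_pow_eq_sum_piAntidiag, monomial_pow, ← monomial_sum_prod,
    ← map_natCast (C : R →+* MvPolynomial σ R), C_mul_monomial]

theorem coeff_sum_monomial_pow_of_linearIndependent [Fintype ι] {e : ι → σ →₀ ℕ}
    (he : LinearIndependent ℕ e) (a : ι → R) (k : ι → ℕ) :
    coeff (∑ i, k i • e i) ((∑ i, monomial (e i) (a i)) ^ ∑ i, k i) =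
      Nat.multinomial Finset.univ k * ∏ i, a i ^ k i := by
  classical
  have sum_smul_injective (l : ι → ℕ) (h : ∑ i, l i • e i = ∑ i, k i • e i) : l = k :=
    funext (Fintype.linearIndependent_iffₛ.mp he l k h)
  rw [sum_monomial_pow, coeff_sum, Finset.sum_eq_single k]
  · rw [coeff_monomial, if_pos rfl]
  · intro l _ hlk
    rw [coeff_monomial, if_neg (mt (sum_smul_injective l) hlk)]
  · simp [Finset.mem_piAntidiag]

end SumOfMonomials

section Quintic

/-- The exponent vectors of the terms `x y z³`, `x⁵`, `y⁵` of the quintic `F`, in this order; the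
variables `x`, `y`, `z` are indexed by `0`, `1`, `2`. -/
noncomputable def quinticExponent : Fin 3 → Fin 3 →₀ ℕ :=
  ![Finsupp.single 0 1 + Finsupp.single 1 1 + Finsupp.single 2 3,
    Finsupp.single 0 5, Finsupp.single 1 5]

theorem sum_smul_quinticExponent (k : Fin 3 → ℕ) :
    ∑ i, k i • quinticExponent i =
      Finsupp.single 0 (k 0 + 5 * k 1) + Finsupp.single 1 (k 0 + 5 * k 2) +
        Finsupp.single 2 (3 * k 0) := by
  ext j
  fin_cases j <;> simp [quinticExponent, Fin.sum_univ_three, mul_comm]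

theorem linearIndependent_quinticExponent : LinearIndependent ℕ quinticExponent := by
  rw [Fintype.linearIndependent_iffₛ]
  intro k l h
  simp only [sum_smul_quinticExponent] at h
  have hx : k 0 + 5 * k 1 = l 0 + 5 * l 1 := by simpa using DFunLike.congr_fun h 0
  have hy : k 0 + 5 * k 2 = l 0 + 5 * l 2 := by simpa using DFunLike.congr_fun h 1
  have hz : k 0 = l 0 := by simpa using DFunLike.congr_fun h 2
  intro i
  fin_cases i <;> dsimp <;> omega

variable {R : Type*} [CommSemiring R]

theorem quintic_eq_sum_monomial (s t : R) :
    (X 0 * X 1 * X 2 ^ 3 + C s * X 0 ^ 5 + C t * X 1 ^ 5 : MvPolynomial (Fin 3) R) =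
      ∑ i, monomial (quinticExponent i) (![1, s, t] i) := by
  simp [quinticExponent, Fin.sum_univ_three, X, monomial_pow, C_mul_monomial]

theorem coeff_quintic_pow (s t : R) (k : Fin 3 → ℕ) :
    coeff
      (Finsupp.single 0 (k 0 + 5 * k 1) + Finsupp.single 1 (k 0 + 5 * k 2) +
        Finsupp.single 2 (3 * k 0))
      ((X 0 * X 1 * X 2 ^ 3 + C s * X 0 ^ 5 + C t * X 1 ^ 5 : MvPolynomial (Fin 3) R) ^
        ∑ i, k i) =
      s ^ k 1 * t ^ k 2 * Nat.multinomial Finset.univ k := by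
  rw [← sum_smul_quinticExponent, quintic_eq_sum_monomial,
    coeff_sum_monomial_pow_of_linearIndependent linearIndependent_quinticExponent, mul_comm]
  simp [Fin.prod_univ_three]

theorem stmt_10_general [NoZeroDivisors R] {m : ℕ} (hm : ((3 * m).factorial : R) ≠ 0) {s t : R}
    (hs : s ≠ 0) (ht : t ≠ 0) :
    coeff
      (Finsupp.single 0 (6 * m) + Finsupp.single 1 (6 * m) + Finsupp.single 2 (3 * m))
      ((X 0 * X 1 * X 2 ^ 3 + C s * X 0 ^ 5 + C t * X 1 ^ 5 : MvPolynomial (Fin 3) R) ^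
        (3 * m)) =
      s ^ m * t ^ m * (((3 * m).factorial / m.factorial ^ 3 : ℕ) : R) ∧
    coeff
      (Finsupp.single 0 (6 * m) + Finsupp.single 1 (6 * m) + Finsupp.single 2 (3 * m))
      ((X 0 * X 1 * X 2 ^ 3 + C s * X 0 ^ 5 + C t * X 1 ^ 5 : MvPolynomial (Fin 3) R) ^
        (3 * m)) ≠ 0 := by
  have hsum : ∑ _i : Fin 3, m = 3 * m := by simp
  have hsix : m + 5 * m = 6 * m := by ring
  have hcoeff := coeff_quintic_pow s t fun _ => m
  simp only [hsum, hsix] at hcoeff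
  have hmultinomial : (Nat.multinomial Finset.univ (fun _ : Fin 3 => m) : R) ≠ 0 :=
    natCast_multinomial_ne_zero (by rwa [hsum])
  refine ⟨by rw [hcoeff, multinomial_const, Finset.card_fin], ?_⟩
  rw [hcoeff]
  exact mul_ne_zero (mul_ne_zero (pow_ne_zero m hs) (pow_ne_zero m ht)) hmultinomial

end Quintic

/-- If `p > 5` is a prime with `p ≡ 1 (mod 3)`, then the coefficient of
`x^(2p-2)*y^(2p-2)*z^(p-1)` in `F^(p-1)` equals `s^((p-1)/3) * t^((p-1)/3)` times
the multinomial coefficient `(p-1)!/(((p-1)/3)!)^3` viewed in `K`, and is nonzero. -/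
theorem stmt_10 (p : ℕ) (hp : p.Prime) (hp5 : 5 < p) (h3 : p % 3 = 1)
    (K : Type*) [Field K] [CharP K p] (s t : K) (hs : s ≠ 0) (ht : t ≠ 0) :
    MvPolynomial.coeff
      (Finsupp.single (0 : Fin 3) (2 * p - 2) + Finsupp.single 1 (2 * p - 2) +
        Finsupp.single 2 (p - 1))
      ((X 0 * X 1 * X 2 ^ 3 + C s * X 0 ^ 5 + C t * X 1 ^ 5 :
          MvPolynomial (Fin 3) K) ^ (p - 1)) =
      s ^ ((p - 1) / 3) * t ^ ((p - 1) / 3) *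
        ((((p - 1).factorial / (((p - 1) / 3).factorial) ^ 3) : ℕ) : K) ∧
    MvPolynomial.coeff
      (Finsupp.single (0 : Fin 3) (2 * p - 2) + Finsupp.single 1 (2 * p - 2) +
        Finsupp.single 2 (p - 1))
      ((X 0 * X 1 * X 2 ^ 3 + C s * X 0 ^ 5 + C t * X 1 ^ 5 :
          MvPolynomial (Fin 3) K) ^ (p - 1)) ≠ 0 := by
  obtain ⟨m, rfl⟩ : ∃ m, p = 3 * m + 1 := ⟨p / 3, by omega⟩
  simpa [show 2 * (3 * m + 1) - 2 = 6 * m by omega] using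
    stmt_10_general (natCast_factorial_ne_zero_of_lt_char hp (Nat.lt_succ_self (3 * m))) hs ht
end

section
/- There are infinitely many primes p such that p ≡ 2 (mod 3) and p ≡ 1 (mod 5) or p ≡ 4 (mod 5); equivalently, infinitely many primes p congruent to 11 or 14 modulo 15. Consequently, there are infinitely many primes p > 5 such that for every field K of characteristic p and all nonzero s, t ∈ K, every coefficient of F^(p-1) at an exponent triple in E(p) vanishes, where F = x*y*z^3 + s*x^5 + t*y^5. -/
open MvPolynomial

/-- The set of 25 exponent triples from the Hasse–Witt criterion for
`x*y*z^3 + s*x^5 + t*y^5`. -/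
def Ep (p : ℕ) : Finset (ℕ × ℕ × ℕ) :=
  { (3*p-3, p-1, p-1), (3*p-1, p-3, p-1), (3*p-2, p-2, p-1), (3*p-2, p-1, p-2),
    (3*p-1, p-2, p-2),
    (p-3, 3*p-1, p-1), (p-1, 3*p-3, p-1), (p-2, 3*p-2, p-1), (p-2, 3*p-1, p-2),
    (p-1, 3*p-2, p-2),
    (2*p-3, 2*p-1, p-1), (2*p-1, 2*p-3, p-1), (2*p-2, 2*p-2, p-1), (2*p-2, 2*p-1, p-2),
    (2*p-1, 2*p-2, p-2),
    (2*p-3, p-1, 2*p-1), (2*p-1, p-3, 2*p-1), (2*p-2, p-2, 2*p-1), (2*p-2, p-1, 2*p-2),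
    (2*p-1, p-2, 2*p-2),
    (p-3, 2*p-1, 2*p-1), (p-1, 2*p-3, 2*p-1), (p-2, 2*p-2, 2*p-1), (p-2, 2*p-1, 2*p-2),
    (p-1, 2*p-2, 2*p-2) }

/-!
Scaling `z` by a cube root of unity, or `(x, y)` to `(ζ x, ζ⁻¹ y)` with `ζ ^ 5 = 1`, fixes `F`, so
a monomial `x ^ i * y ^ j * z ^ k` of a power of `F` has `3 ∣ k` and `i ≡ j [MOD 5]`. For
`p ≡ 2 [MOD 3]` the triples of `Ep p` with `3 ∣ k` have `k = p - 2` or `k = 2 * p - 1`, and there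
`i - j` is, up to sign, one of `1`, `2 * p ± 1`, `p`, `p ± 2`. None of these is divisible by `5`
when `p ≡ ±1 [MOD 5]`. Dirichlet's theorem supplies infinitely many such primes.
-/

section Quintic

variable {R : Type*} [CommSemiring R]

/-- The polynomial `F = x * y * z ^ 3 + s * x ^ 5 + t * y ^ 5`, with `x`, `y`, `z` the variables
of index `0`, `1`, `2`: the polynomial whose powers `stmt_12` is about. -/
noncomputable def quintic (s t : R) : MvPolynomial (Fin 3) R :=
  X 0 * X 1 * X 2 ^ 3 + C s * X 0 ^ 5 + C t * X 1 ^ 5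

lemma isWeightedHomogeneous_quintic {M : Type*} [AddCommMonoid M] {w : Fin 3 → M} {d : M}
    (hxyz : w 0 + w 1 + 3 • w 2 = d) (hx : 5 • w 0 = d) (hy : 5 • w 1 = d) (s t : R) :
    IsWeightedHomogeneous w (quintic s t) d := by
  have hX := isWeightedHomogeneous_X R w
  have hxyz' : IsWeightedHomogeneous w (X 0 * X 1 * X 2 ^ 3 : MvPolynomial (Fin 3) R) d :=
    hxyz ▸ ((hX 0).mul (hX 1)).mul ((hX 2).pow 3)
  have hx' : IsWeightedHomogeneous w (C s * X 0 ^ 5) d := hx ▸ ((hX 0).pow 5).C_mul s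
  have hy' : IsWeightedHomogeneous w (C t * X 1 ^ 5) d := hy ▸ ((hX 1).pow 5).C_mul t
  exact (hxyz'.add hx').add hy'

variable {s t : R} {n : ℕ} {m : Fin 3 →₀ ℕ}

lemma three_dvd_of_coeff_quintic_pow_ne_zero (hm : coeff m (quintic s t ^ n) ≠ 0) : 3 ∣ m 2 := by
  have hw : IsWeightedHomogeneous (![0, 0, 1] : Fin 3 → ZMod 3) (quintic s t) 0 :=
    isWeightedHomogeneous_quintic (by decide) (by decide) (by decide) s t
  have hweight := hw.pow n hm
  rw [← ZMod.natCast_eq_zero_iff]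
  simpa [Finsupp.weight_eq_sum, Fin.sum_univ_three] using hweight

lemma modEq_five_of_coeff_quintic_pow_ne_zero (hm : coeff m (quintic s t ^ n) ≠ 0) :
    m 0 ≡ m 1 [MOD 5] := by
  have hw : IsWeightedHomogeneous (![1, -1, 0] : Fin 3 → ZMod 5) (quintic s t) 0 :=
    isWeightedHomogeneous_quintic (by decide) (by decide) (by decide) s t
  have hweight := hw.pow n hm
  rw [← ZMod.natCast_eq_natCast_iff, ← sub_eq_zero]
  simpa [Finsupp.weight_eq_sum, Fin.sum_univ_three, sub_eq_add_neg] using hweight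

end Quintic

section Exponents

variable {p i j k : ℕ}

lemma eq_sub_two_or_eq_two_mul_sub_one_of_mem_Ep (hp : p % 3 = 2) (h : (i, j, k) ∈ Ep p)
    (hk : 3 ∣ k) : k = p - 2 ∨ k = 2 * p - 1 := by
  have hk_mem : k = p - 1 ∨ k = p - 2 ∨ k = 2 * p - 1 ∨ k = 2 * p - 2 := by
    simp only [Ep, Finset.mem_insert, Finset.mem_singleton, Prod.mk.injEq] at h
    tauto
  omega

lemma natAbs_sub_of_mem_Ep (hp : p % 3 = 2) (h : (i, j, k) ∈ Ep p) (hk : 3 ∣ k) :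
    (i - j : ℤ).natAbs ∈ ({1, 2 * p - 1, 2 * p + 1, p - 2, p, p + 2} : Finset ℕ) := by
  obtain rfl | rfl := eq_sub_two_or_eq_two_mul_sub_one_of_mem_Ep hp h hk
  all_goals
    simp only [Ep, Finset.mem_insert, Finset.mem_singleton, Prod.mk.injEq] at h ⊢
    omega

lemma not_modEq_five_of_mem_Ep (hp3 : p % 3 = 2) (hp5 : p % 5 = 1 ∨ p % 5 = 4)
    (h : (i, j, k) ∈ Ep p) (hk : 3 ∣ k) : ¬ i ≡ j [MOD 5] := by
  have hdiff := natAbs_sub_of_mem_Ep hp3 h hk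
  simp only [Finset.mem_insert, Finset.mem_singleton] at hdiff
  unfold Nat.ModEq
  omega

end Exponents

lemma coeff_quintic_pow_eq_zero_of_mem_Ep {R : Type*} [CommSemiring R] (s t : R) (n : ℕ) {p : ℕ}
    (hp3 : p % 3 = 2) (hp5 : p % 5 = 1 ∨ p % 5 = 4) {ijk : ℕ × ℕ × ℕ} (h : ijk ∈ Ep p) :
    coeff (Finsupp.single 0 ijk.1 + Finsupp.single 1 ijk.2.1 + Finsupp.single 2 ijk.2.2)
      (quintic s t ^ n) = 0 := by
  by_contra hne
  have hk : 3 ∣ ijk.2.2 := by simpa using three_dvd_of_coeff_quintic_pow_ne_zero hne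
  have hij : ijk.1 ≡ ijk.2.1 [MOD 5] := by simpa using modEq_five_of_coeff_quintic_pow_ne_zero hne
  exact not_modEq_five_of_mem_Ep hp3 hp5 h hk hij

lemma infinite_setOf_prime_mod_three_mod_five :
    {p : ℕ | p.Prime ∧ p % 3 = 2 ∧ (p % 5 = 1 ∨ p % 5 = 4)}.Infinite := by
  have h11 : {p : ℕ | p.Prime ∧ p ≡ 11 [MOD 15]}.Infinite :=
    Nat.infinite_setOfPred_prime_and_modEq (by norm_num) (by norm_num)
  refine h11.mono ?_
  rintro p ⟨hp, hmod⟩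
  refine ⟨hp, ?_⟩
  unfold Nat.ModEq at hmod
  omega

theorem stmt_12_general :
    {p : ℕ | p.Prime ∧ p % 3 = 2 ∧ (p % 5 = 1 ∨ p % 5 = 4)}.Infinite ∧
    {p : ℕ | p.Prime ∧ (p % 15 = 11 ∨ p % 15 = 14)}.Infinite ∧
    {p : ℕ | p.Prime ∧ 5 < p ∧
      ∀ (R : Type*) [CommSemiring R] (s t : R) (n : ℕ), ∀ ijk ∈ Ep p,
        coeff (Finsupp.single 0 ijk.1 + Finsupp.single 1 ijk.2.1 + Finsupp.single 2 ijk.2.2)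
          (quintic s t ^ n) = 0}.Infinite := by
  have hinf := infinite_setOf_prime_mod_three_mod_five
  refine ⟨hinf, hinf.mono ?_, hinf.mono ?_⟩
  · rintro p ⟨hp, hp3, hp5⟩
    exact ⟨hp, by omega⟩
  · rintro p ⟨hp, hp3, hp5⟩
    exact ⟨hp, by omega, fun R _ s t n _ h => coeff_quintic_pow_eq_zero_of_mem_Ep s t n hp3 hp5 h⟩

/-- There are infinitely many primes `p ≡ 2 (mod 3)` with `p ≡ 1` or `4 (mod 5)`
(equivalently, `p ≡ 11` or `14 (mod 15)`), and consequently infinitely many primes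
`p > 5` such that for every field `K` of characteristic `p` and nonzero `s, t : K`,
every coefficient of `F^(p-1)` at an exponent triple in `Ep p` vanishes, where
`F = x*y*z^3 + s*x^5 + t*y^5`. -/
theorem stmt_12 :
    {p : ℕ | p.Prime ∧ p % 3 = 2 ∧ (p % 5 = 1 ∨ p % 5 = 4)}.Infinite ∧
    {p : ℕ | p.Prime ∧ (p % 15 = 11 ∨ p % 15 = 14)}.Infinite ∧
    {p : ℕ | p.Prime ∧ 5 < p ∧
      ∀ (K : Type) [Field K], CharP K p →
        ∀ s t : K, s ≠ 0 → t ≠ 0 → ∀ ijk ∈ Ep p,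
          MvPolynomial.coeff
            (Finsupp.single (0 : Fin 3) ijk.1 + Finsupp.single 1 ijk.2.1 +
              Finsupp.single 2 ijk.2.2)
            ((X 0 * X 1 * X 2 ^ 3 + C s * X 0 ^ 5 + C t * X 1 ^ 5 :
                MvPolynomial (Fin 3) K) ^ (p - 1)) = 0}.Infinite := by
  obtain ⟨hmod, hmod15, hcoeff⟩ := stmt_12_general
  exact ⟨hmod, hmod15, hcoeff.mono fun _ h => ⟨h.1, h.2.1, fun K _ _ s t _ _ => h.2.2 K s t _⟩⟩
end
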